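/- Let χ be an odd Dirichlet character of conductor f (i.e., χ(-1) = -1). Then the generalized Bernoulli number B_{1,χ} = ∑_{k=1}^{f} χ(k)·B₁(k/f) is nonzero. -/

import Mathlib

open Classical in
/-- The first periodic Bernoulli function. -/
noncomputable def B1 (x : ℝ) : ℝ := if ∃ m : ℤ, x = (m : ℝ) then 0 else Int.fract x - 1/2

open Filter Topology

/-- A mean-value type bound for differences of negative powers. -/
lemma abs_rpow_neg_sub_rpow_neg_le {w u v s : ℝ} (hw : 0 < w) (hu : w ≤ u) (hv : w ≤ v)
    (hs : 1 ≤ s) : |u ^ (-s) - v ^ (-s)| ≤ s * |u - v| * w ^ (-s - 1) := by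
  wlog huv : u ≤ v generalizing u v
  · rw [abs_sub_comm, abs_sub_comm u v]
    exact this hv hu (le_of_not_ge huv)
  have hu0 : 0 < u := hw.trans_le hu
  have hv0 : 0 < v := hw.trans_le hv
  have hanti : v ^ (-s) ≤ u ^ (-s) := Real.rpow_le_rpow_of_nonpos hu0 huv (by linarith)
  rw [abs_of_nonneg (sub_nonneg.mpr hanti), abs_sub_comm, abs_of_nonneg (sub_nonneg.mpr huv)]
  have hbern := one_add_mul_self_le_rpow_one_add (s := u / v - 1)
    (by have := div_pos hu0 hv0; linarith) hs
  rw [add_sub_cancel, Real.div_rpow hu0.le hv0.le] at hbern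
  have hfac : u ^ (-s) - v ^ (-s) = u ^ (-s) * (1 - u ^ s / v ^ s) := by
    rw [Real.rpow_neg hu0.le, Real.rpow_neg hv0.le]
    have := (Real.rpow_pos_of_pos hu0 s).ne'
    have := (Real.rpow_pos_of_pos hv0 s).ne'
    field_simp
  have hone : 1 - u ^ s / v ^ s ≤ s * (v - u) * v⁻¹ := by
    have : s * (u / v - 1) = - (s * (v - u) * v⁻¹) := by field_simp; ring
    linarith
  have hnn : 0 ≤ s * (v - u) := mul_nonneg (by linarith) (sub_nonneg.mpr huv)
  calc u ^ (-s) - v ^ (-s) ≤ u ^ (-s) * (s * (v - u) * v⁻¹) := by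
        rw [hfac]; gcongr
    _ ≤ w ^ (-s) * (s * (v - u) * w⁻¹) := by
        gcongr ?_ * (s * (v - u) * ?_)
        · exact Real.rpow_le_rpow_of_nonpos hw hu (by linarith)
        · exact inv_anti₀ hw hv
    _ = s * (v - u) * w ^ (-s - 1) := by
        rw [Real.rpow_sub_one hw.ne']; ring

/-- A uniform bound on the terms of the series defining the odd Hurwitz zeta function. -/
lemma norm_hurwitzZetaOdd_term_le {a c s : ℝ} (hc : 0 < c) (hca : c ≤ a) (hca' : c ≤ 1 - a)
    (hs : 1 ≤ s) (hs2 : s ≤ 2) (n : ℕ) :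
    ‖(1 / (n + a : ℂ) ^ (s : ℂ) - 1 / (n + 1 - a : ℂ) ^ (s : ℂ)) / 2‖ ≤
      c ^ (-3 : ℝ) * (1 / ((n : ℝ) + 1) ^ 2) := by
  have hn : (0 : ℝ) ≤ n := n.cast_nonneg
  have hc1 : c ≤ 1 := by linarith
  have hu : c * (n + 1) ≤ n + a := by nlinarith
  have hv : c * (n + 1) ≤ n + 1 - a := by nlinarith
  have hw : 0 < c * ((n : ℝ) + 1) := by positivity
  have hcast : (1 / (n + a : ℂ) ^ (s : ℂ) - 1 / (n + 1 - a : ℂ) ^ (s : ℂ)) / 2 =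
      (((((n : ℝ) + a) ^ (-s) - ((n : ℝ) + 1 - a) ^ (-s)) / 2 : ℝ) : ℂ) := by
    rw [Real.rpow_neg (by linarith), Real.rpow_neg (by linarith)]
    push_cast [Complex.ofReal_cpow (show (0 : ℝ) ≤ n + a by linarith),
      Complex.ofReal_cpow (show (0 : ℝ) ≤ n + 1 - a by linarith)]
    simp only [one_div]
  rw [hcast, Complex.norm_real, Real.norm_eq_abs, abs_div, abs_two, div_le_iff₀ two_pos]
  refine (abs_rpow_neg_sub_rpow_neg_le hw hu hv hs).trans ?_
  have hd : |(n : ℝ) + a - (n + 1 - a)| ≤ 1 := abs_le.mpr ⟨by linarith, by linarith⟩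
  have hpow : (c * ((n : ℝ) + 1)) ^ (-s - 1) ≤ c ^ (-3 : ℝ) * (1 / ((n : ℝ) + 1) ^ 2) := by
    rw [Real.mul_rpow hc.le (by positivity)]
    refine mul_le_mul ?_ ?_ (by positivity) (by positivity)
    · exact Real.rpow_le_rpow_of_exponent_ge hc hc1 (by linarith)
    · rw [one_div, ← Real.rpow_natCast, ← Real.rpow_neg (by positivity)]
      exact Real.rpow_le_rpow_of_exponent_le (by linarith) (by push_cast; linarith)
  calc s * |(n : ℝ) + a - (n + 1 - a)| * (c * (n + 1)) ^ (-s - 1)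
      ≤ 2 * 1 * (c ^ (-3 : ℝ) * (1 / ((n : ℝ) + 1) ^ 2)) := by gcongr
    _ = _ := by ring

/-- The defining series of the odd Hurwitz zeta function still sums to it at `s = 1`. -/
lemma hasSum_nat_hurwitzZetaOdd_one {a : ℝ} (ha : a ∈ Set.Ioo (0 : ℝ) 1) :
    HasSum (fun n : ℕ ↦ (1 / (n + a : ℂ) - 1 / (n + 1 - a : ℂ)) / 2)
      (HurwitzZeta.hurwitzZetaOdd a 1) := by
  set c := min a (1 - a)
  have hc : 0 < c := lt_min ha.1 (by linarith [ha.2])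
  have hca : c ≤ a := min_le_left _ _
  have hca' : c ≤ 1 - a := min_le_right _ _
  have hsum : Summable fun n : ℕ ↦ c ^ (-3 : ℝ) * (1 / ((n : ℝ) + 1) ^ 2) := by
    refine Summable.mul_left _ ?_
    have := (summable_nat_add_iff 1).mpr (Real.summable_one_div_nat_pow.mpr one_lt_two)
    simpa using this
  have hlim := tendsto_tsum_of_dominated_convergence (𝓕 := 𝓝[>] (1 : ℝ))
    (f := fun (s : ℝ) (n : ℕ) ↦ (1 / (n + a : ℂ) ^ (s : ℂ) - 1 / (n + 1 - a : ℂ) ^ (s : ℂ)) / 2)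
    (g := fun n : ℕ ↦ (1 / (n + a : ℂ) - 1 / (n + 1 - a : ℂ)) / 2) hsum
    (fun n ↦ by
      have hn : (0 : ℝ) ≤ n := n.cast_nonneg
      have hpow (b : ℂ) (hb : b ≠ 0) :
          Tendsto (fun s : ℝ ↦ 1 / b ^ (s : ℂ)) (𝓝[>] (1 : ℝ)) (𝓝 (1 / b)) := by
        have hcont : Continuous fun s : ℝ ↦ b ^ (s : ℂ) :=
          Complex.continuous_ofReal.const_cpow (Or.inl hb)
        have := (hcont.tendsto 1).mono_left (nhdsWithin_le_nhds (s := Set.Ioi (1 : ℝ)))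
        rw [Complex.ofReal_one, Complex.cpow_one] at this
        exact tendsto_const_nhds.div this hb
      refine ((hpow _ ?_).sub (hpow _ ?_)).div_const 2
      · exact_mod_cast (show (n : ℝ) + a ≠ 0 by linarith [ha.1])
      · exact_mod_cast (show (n : ℝ) + 1 - a ≠ 0 by linarith [ha.2]))
    (by
      filter_upwards [Ioo_mem_nhdsGT (one_lt_two (α := ℝ))] with s hs n
      exact norm_hurwitzZetaOdd_term_le hc hca hca' hs.1.le hs.2.le n)
  have hlim' : Tendsto (fun s : ℝ ↦ HurwitzZeta.hurwitzZetaOdd a (s : ℂ)) (𝓝[>] (1 : ℝ))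
      (𝓝 (HurwitzZeta.hurwitzZetaOdd a 1)) := by
    have hcont : Continuous fun s : ℝ ↦ HurwitzZeta.hurwitzZetaOdd a (s : ℂ) :=
      (HurwitzZeta.differentiable_hurwitzZetaOdd a).continuous.comp Complex.continuous_ofReal
    simpa using (hcont.tendsto 1).mono_left (nhdsWithin_le_nhds (s := Set.Ioi (1 : ℝ)))
  have heq : HurwitzZeta.hurwitzZetaOdd a 1 =
      ∑' n : ℕ, (1 / (n + a : ℂ) - 1 / (n + 1 - a : ℂ)) / 2 := by
    refine tendsto_nhds_unique (hlim'.congr' ?_) hlim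
    filter_upwards [self_mem_nhdsWithin] with s hs
    exact (HurwitzZeta.hasSum_nat_hurwitzZetaOdd_of_mem_Icc ⟨ha.1.le, ha.2.le⟩
      (by simpa using hs)).tsum_eq.symm
  rw [heq]
  refine (Summable.of_norm_bounded hsum fun n ↦ ?_).hasSum
  simpa using norm_hurwitzZetaOdd_term_le hc hca hca' le_rfl one_le_two n

/-- The value at `s = 1` of the odd Hurwitz zeta function. -/
lemma hurwitzZetaOdd_one {a : ℝ} (ha : a ∈ Set.Ioo (0 : ℝ) 1) :
    HurwitzZeta.hurwitzZetaOdd a 1 = Real.pi * Complex.cot (Real.pi * a) / 2 := by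
  have hz : (a : ℂ) ∈ Complex.integerComplement := by
    rintro ⟨m, hm⟩
    have hm' : (m : ℝ) = a := by exact_mod_cast hm
    have h0 : (0 : ℝ) < m := hm' ▸ ha.1
    have h1 : (m : ℝ) < 1 := hm' ▸ ha.2
    norm_cast at h0 h1
    lia
  have hpartial (N : ℕ) :
      ∑ n ∈ Finset.range N, (1 / (n + a : ℂ) - 1 / (n + 1 - a : ℂ)) / 2 =
        (1 / a + ∑ n ∈ Finset.range N, cotTerm a n - 1 / (N + a)) / 2 := by
    induction N with
    | zero => simp
    | succ N ih =>
      rw [Finset.sum_range_succ, Finset.sum_range_succ, ih, cotTerm,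
        show (a : ℂ) - (N + 1) = -(N + 1 - a) by ring, one_div_neg_eq_neg_one_div]
      push_cast
      ring
  have hinv : Tendsto (fun N : ℕ ↦ 1 / ((N : ℂ) + a)) atTop (𝓝 0) := by
    simp_rw [one_div]
    refine tendsto_inv₀_cobounded.comp (tendsto_norm_atTop_iff_cobounded.mp ?_)
    refine tendsto_atTop_mono (fun N ↦ ?_) (tendsto_natCast_atTop_atTop (R := ℝ))
    rw [← Complex.ofReal_natCast, ← Complex.ofReal_add, Complex.norm_real]
    exact (le_add_of_nonneg_right ha.1.le).trans (le_abs_self _)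
  have hR := (((tendsto_logDeriv_euler_cot_sub hz).const_add (1 / (a : ℂ))).sub hinv).div_const 2
  rw [show 1 / (a : ℂ) + (Real.pi * Complex.cot (Real.pi * a) - 1 / a) - 0 =
    Real.pi * Complex.cot (Real.pi * a) by ring] at hR
  refine tendsto_nhds_unique (hasSum_nat_hurwitzZetaOdd_one ha).tendsto_sum_nat ?_
  exact hR.congr fun N ↦ (hpartial N).symm

/-- The first moment of the powers of a nontrivial `N`-th root of unity. -/
lemma sum_range_mul_pow_of_pow_eq_one {z : ℂ} {N : ℕ} (hz : z ^ N = 1) (hz1 : z ≠ 1) :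
    ∑ k ∈ Finset.range N, (k : ℂ) * z ^ k = N / (z - 1) := by
  have hne : z - 1 ≠ 0 := sub_ne_zero.mpr hz1
  have key (M : ℕ) : (∑ k ∈ Finset.range M, (k : ℂ) * z ^ k) * (z - 1) =
      M * z ^ M - z * ∑ k ∈ Finset.range M, z ^ k := by
    induction M with
    | zero => simp
    | succ M ih =>
      rw [Finset.sum_range_succ, Finset.sum_range_succ, add_mul, ih]
      push_cast
      ring
  rw [eq_div_iff hne, key, geom_sum_eq hz1, hz]
  simp

lemma sum_range_eq_sum_zmod {N : ℕ} [NeZero N] (F : ZMod N → ℕ → ℂ) :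
    ∑ k ∈ Finset.range N, F k k = ∑ k : ZMod N, F k k.val := by
  symm
  refine Finset.sum_bij (fun k _ ↦ k.val) (fun k _ ↦ Finset.mem_range.mpr k.val_lt)
    (fun _ _ _ _ h ↦ ZMod.val_injective N h) (fun k hk ↦ ⟨k, Finset.mem_univ _,
      ZMod.val_cast_of_lt (Finset.mem_range.mp hk)⟩) fun k _ ↦ ?_
  rw [ZMod.natCast_zmod_val]

/-- A finite Fourier expansion of the cotangent. -/
lemma cot_pi_mul_val_div {N : ℕ} [NeZero N] {j : ZMod N} (hj : j ≠ 0) :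
    Complex.cot (Real.pi * ((j.val : ℝ) / N : ℝ)) =
      Complex.I * (1 + 2 / N * ∑ k : ZMod N, (k.val : ℂ) * ZMod.stdAddChar (k * j)) := by
  set z : ℂ := ZMod.stdAddChar j with hzdef
  have hexp : Complex.exp (2 * Real.pi * Complex.I * ((j.val : ℝ) / N : ℝ)) = z := by
    have := ZMod.stdAddChar_coe (N := N) (j.val : ℤ)
    rw [Int.cast_natCast, ZMod.natCast_zmod_val] at this
    rw [hzdef, this]
    push_cast
    ring_nf
  have hz1 : z ≠ 1 := fun h ↦ hj <| ZMod.injective_stdAddChar <| by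
    rw [AddChar.map_zero_eq_one]; exact h
  have hpow (k : ℕ) : ZMod.stdAddChar ((k : ZMod N) * j) = z ^ k := by
    rw [← nsmul_eq_mul, AddChar.map_nsmul_eq_pow]
  have hzN : z ^ N = 1 := by rw [← hpow]; simp
  have hsum : ∑ k : ZMod N, (k.val : ℂ) * ZMod.stdAddChar (k * j) = N / (z - 1) := by
    rw [← sum_range_mul_pow_of_pow_eq_one hzN hz1,
      ← sum_range_eq_sum_zmod fun x k ↦ (k : ℂ) * ZMod.stdAddChar (x * j)]
    simp_rw [hpow]
  rw [Complex.cot_pi_eq_exp_ratio, hexp, hsum]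
  have hN : (N : ℂ) ≠ 0 := NeZero.ne _
  have hne : z - 1 ≠ 0 := sub_ne_zero.mpr hz1
  have hne' : 1 - z ≠ 0 := sub_ne_zero.mpr hz1.symm
  have hI := Complex.I_ne_zero
  rw [div_eq_iff (mul_ne_zero hI hne')]
  field_simp
  linear_combination (1 - z) * (-z - 1) * Complex.I_sq

lemma map_zero_of_ne_one {N : ℕ} {χ : DirichletCharacter ℂ N} (hχ : χ ≠ 1) : χ 0 = 0 := by
  refine χ.map_nonunit fun h ↦ hχ ?_
  have : Subsingleton (ZMod N) := subsingleton_of_zero_eq_one (isUnit_zero_iff.mp h)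
  ext x
  rw [Subsingleton.elim (x : ZMod N) 1, map_one, map_one]

/-- For odd primitive `χ`, the value `L(χ, 1)` is a multiple of `∑ k, χ⁻¹(k) k`. -/
lemma LFunction_one_of_odd_of_isPrimitive {N : ℕ} [NeZero N] {χ : DirichletCharacter ℂ N}
    (hprim : χ.IsPrimitive) (hodd : χ.Odd) (hχ : χ ≠ 1) :
    χ.LFunction 1 = (N : ℂ)⁻¹ * (Real.pi / 2 * (Complex.I * (2 / N *
      (gaussSum χ ZMod.stdAddChar * ∑ k : ZMod N, (k.val : ℂ) * χ⁻¹ k)))) := by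
  have hterm (j : ZMod N) : χ j * HurwitzZeta.hurwitzZetaOdd (ZMod.toAddCircle j) 1 =
      Real.pi / 2 * (Complex.I * (χ j + 2 / N * ∑ k : ZMod N, (k.val : ℂ) *
        (χ j * ZMod.stdAddChar (k * j)))) := by
    rcases eq_or_ne j 0 with rfl | hj
    · simp [map_zero_of_ne_one hχ]
    · have hN : (0 : ℝ) < N := Nat.cast_pos.mpr (NeZero.pos N)
      have hval : 0 < j.val := Nat.pos_of_ne_zero ((ZMod.val_ne_zero j).mpr hj)
      have hmem : (j.val : ℝ) / N ∈ Set.Ioo (0 : ℝ) 1 :=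
        ⟨by positivity, (div_lt_one hN).mpr (by exact_mod_cast j.val_lt)⟩
      rw [ZMod.toAddCircle_apply, hurwitzZetaOdd_one hmem, cot_pi_mul_val_div hj]
      have hswap : ∑ k : ZMod N, (k.val : ℂ) * (χ j * ZMod.stdAddChar (k * j)) =
          χ j * ∑ k : ZMod N, (k.val : ℂ) * ZMod.stdAddChar (k * j) := by
        rw [Finset.mul_sum]
        exact Finset.sum_congr rfl fun k _ ↦ by ring
      rw [hswap]
      ring
  have hgauss (k : ZMod N) : ∑ j : ZMod N, χ j * ZMod.stdAddChar (k * j) =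
      χ⁻¹ k * gaussSum χ ZMod.stdAddChar := by
    rw [← gaussSum_mulShift_of_isPrimitive _ hprim k]
    rfl
  have hΦ : Function.Odd (χ : ZMod N → ℂ) := hodd.to_fun
  rw [DirichletCharacter.LFunction, ZMod.LFunction_def_odd hΦ, Complex.cpow_neg_one]
  simp_rw [hterm]
  rw [← Finset.mul_sum, ← Finset.mul_sum, Finset.sum_add_distrib, ← Finset.mul_sum,
    MulChar.sum_eq_zero_of_ne_one hχ, zero_add, Finset.sum_comm]
  simp_rw [← Finset.mul_sum, hgauss]
  congr 5
  rw [Finset.mul_sum]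
  exact Finset.sum_congr rfl fun k _ ↦ by ring

lemma B1_natCast_div_of_lt {k f : ℕ} (hk : 0 < k) (hkf : k < f) :
    B1 ((k : ℝ) / f) = (k : ℝ) / f - 1 / 2 := by
  have hf : (0 : ℝ) < f := by exact_mod_cast hk.trans hkf
  have h0 : 0 < (k : ℝ) / f := div_pos (by exact_mod_cast hk) hf
  have h1 : (k : ℝ) / f < 1 := (div_lt_one hf).mpr (by exact_mod_cast hkf)
  rw [B1, if_neg, Int.fract_eq_self.mpr ⟨h0.le, h1⟩]
  rintro ⟨m, hm⟩
  rw [hm] at h0 h1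
  norm_cast at h0 h1
  lia

/-- For nontrivial `χ`, the generalized Bernoulli number is the normalised first moment of `χ`. -/
lemma sum_mul_B1_eq {f : ℕ} [NeZero f] {χ : DirichletCharacter ℂ f} (hχ : χ ≠ 1) :
    ∑ k ∈ Finset.Icc 1 f, χ (k : ZMod f) * ((B1 ((k : ℝ) / (f : ℝ)) : ℝ) : ℂ) =
      (f : ℂ)⁻¹ * ∑ k : ZMod f, (k.val : ℂ) * χ k := by
  have h0 := map_zero_of_ne_one hχ
  have hterm (k : ℕ) (hk : k ∈ Finset.range f) :
      χ (k : ZMod f) * ((B1 ((k : ℝ) / (f : ℝ)) : ℝ) : ℂ) =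
        χ (k : ZMod f) * ((k : ℂ) / f - 1 / 2) := by
    rcases k.eq_zero_or_pos with rfl | hpos
    · simp [h0]
    · rw [B1_natCast_div_of_lt hpos (Finset.mem_range.mp hk)]
      push_cast
      rfl
  have hIcc : ∑ k ∈ Finset.Icc 1 f, χ (k : ZMod f) * ((B1 ((k : ℝ) / (f : ℝ)) : ℝ) : ℂ) =
      ∑ k ∈ Finset.range f, χ (k : ZMod f) * ((B1 ((k : ℝ) / (f : ℝ)) : ℝ) : ℂ) := by
    rw [Finset.range_eq_Ico, Finset.sum_eq_sum_Ico_succ_bot (NeZero.pos f), zero_add,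
      ← Finset.Ico_insert_right (NeZero.one_le), Finset.sum_insert (by simp)]
    simp [h0]
  rw [hIcc, Finset.sum_congr rfl hterm,
    sum_range_eq_sum_zmod fun x k ↦ χ x * ((k : ℂ) / f - 1 / 2)]
  simp_rw [mul_sub, Finset.sum_sub_distrib, ← Finset.sum_mul]
  rw [MulChar.sum_eq_zero_of_ne_one hχ, zero_mul, sub_zero, Finset.mul_sum]
  exact Finset.sum_congr rfl fun k _ ↦ by ring

theorem generalized_bernoulli_ne_zero_of_odd (f : ℕ) (hf : 0 < f)
    (χ : DirichletCharacter ℂ f) (hprim : χ.IsPrimitive) (hodd : χ (-1) = -1) :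
    ∑ k ∈ Finset.Icc 1 f, χ (k : ZMod f) * ((B1 ((k : ℝ) / (f : ℝ)) : ℝ) : ℂ) ≠ 0 := by
  have : NeZero f := ⟨hf.ne'⟩
  have hχ : χ ≠ 1 := by
    rintro rfl
    rw [MulChar.one_apply isUnit_one.neg] at hodd
    norm_num at hodd
  have hprim_inv : χ⁻¹.IsPrimitive := by
    rw [DirichletCharacter.isPrimitive_def, DirichletCharacter.conductor_inv]
    exact hprim
  have hodd_inv : χ⁻¹.Odd := by
    rw [DirichletCharacter.Odd, MulChar.inv_apply_eq_inv', hodd]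
    norm_num
  have hχ_inv : χ⁻¹ ≠ 1 := inv_ne_one.mpr hχ
  intro hB
  rw [sum_mul_B1_eq hχ, mul_eq_zero, or_iff_right (inv_ne_zero (NeZero.ne _))] at hB
  refine DirichletCharacter.LFunction_apply_one_ne_zero hχ_inv ?_
  rw [LFunction_one_of_odd_of_isPrimitive hprim_inv hodd_inv hχ_inv, inv_inv, hB]
  simp
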